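/- arXiv:1301.4463 — 3 statements merged into one kernel-verified Lean document; each statement's English description precedes it below -/
import Mathlib

section
/- Let X be a real-valued Lévy process on a filtered probability space satisfying the usual conditions, and let X̄_t := sup{X_s : s ∈ [0,t]} be its running supremum process. Then X̄ is P-almost surely continuous if and only if X has P-almost surely no positive jumps (i.e., P-a.s., X_{t−} ≥ X_t for all t ≥ 0). -/
open MeasureTheory ProbabilityTheory Filter Set
open scoped ENNReal Topology

/-- Left limit of a path at time `t`, with the convention `f(0-) := f(0)`
(and junk `f t` for `t < 0`). -/
noncomputable def leftLimAt (f : ℝ → ℝ) (t : ℝ) : ℝ :=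
  if 0 < t then Function.leftLim f t else f t

/-- A path `f : [0,∞) → ℝ` is càdlàg: right-continuous on `[0,∞)`,
with left limits on `(0,∞)`. -/
def IsCadlag (f : ℝ → ℝ) : Prop :=
  (∀ t : ℝ, 0 ≤ t → ContinuousWithinAt f (Set.Ici t) t) ∧
  (∀ t : ℝ, 0 < t → ∃ l : ℝ, Filter.Tendsto f (nhdsWithin t (Set.Iio t)) (nhds l))

/-- `X` is a Lévy process w.r.t. the filtration `F` under `P`, on a filtered
probability space satisfying the usual conditions. -/
structure IsLevy {Ω : Type*} {m0 : MeasurableSpace Ω} (P : Measure Ω)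
    (F : MeasureTheory.Filtration ℝ m0) (X : ℝ → Ω → ℝ) : Prop where
  isProb : IsProbabilityMeasure P
  complete : P.IsComplete
  rightCont : ∀ t : ℝ, F t = ⨅ s : Set.Ioi t, F (s : ℝ)
  nullF0 : ∀ N : Set Ω, P N = 0 → MeasurableSet[F 0] N
  adapted : ∀ t : ℝ, Measurable[F t] (X t)
  start : P {ω | X 0 ω = 0} = 1
  cadlag : ∀ᵐ ω ∂P, IsCadlag (fun t => X t ω)
  indep : ∀ s t : ℝ, 0 ≤ s → s ≤ t →
    ProbabilityTheory.Indep
      (MeasurableSpace.comap (fun ω => X t ω - X s ω) inferInstance) (F s) P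
  statInc : ∀ s t : ℝ, 0 ≤ s → s ≤ t →
    Measure.map (fun ω => X t ω - X s ω) P = Measure.map (X (t - s)) P

/-- First passage time `T_x = inf{t ≥ 0 : X_t ≥ x}` (valued in `[0,∞]`, `inf ∅ = ∞`). -/
noncomputable def hitT {Ω : Type*} (X : ℝ → Ω → ℝ) (x : ℝ) (ω : Ω) : ℝ≥0∞ :=
  sInf ((fun t : ℝ => ENNReal.ofReal t) '' {t : ℝ | 0 ≤ t ∧ x ≤ X t ω})

/-- First passage time `T̂_x = inf{t ≥ 0 : X_t > x}`. -/
noncomputable def hitThat {Ω : Type*} (X : ℝ → Ω → ℝ) (x : ℝ) (ω : Ω) : ℝ≥0∞ :=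
  sInf ((fun t : ℝ => ENNReal.ofReal t) '' {t : ℝ | 0 ≤ t ∧ x < X t ω})

/-- `X(T_x)`, the position at the first passage time (junk if `T_x = ∞`). -/
noncomputable def stopVal {Ω : Type*} (X : ℝ → Ω → ℝ) (x : ℝ) (ω : Ω) : ℝ :=
  X (hitT X x ω).toReal ω

/-- `X(T̂_x)`. -/
noncomputable def stopValHat {Ω : Type*} (X : ℝ → Ω → ℝ) (x : ℝ) (ω : Ω) : ℝ :=
  X (hitThat X x ω).toReal ω

/-- `Q^x(B) = P({X(T_x) ∈ B} ∩ {T_x < ∞})`. -/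
noncomputable def Qfun {Ω : Type*} {m0 : MeasurableSpace Ω} (P : Measure Ω)
    (X : ℝ → Ω → ℝ) (x : ℝ) (B : Set ℝ) : ℝ≥0∞ :=
  P ({ω | stopVal X x ω ∈ B} ∩ {ω | hitT X x ω < ⊤})

/-- Running supremum `X̄_t = sup{X_s : s ∈ [0,t]}`. -/
noncomputable def runSup {Ω : Type*} (X : ℝ → Ω → ℝ) (t : ℝ) (ω : Ω) : ℝ :=
  sSup ((fun s => X s ω) '' Set.Icc 0 t)

open scoped NNRat

lemma cadlag_bdd {f : ℝ → ℝ} (hf : IsCadlag f) (t : ℝ) : BddAbove (f '' Icc 0 t) := by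
  refine (isCompact_Icc (a := (0:ℝ)) (b := t)).induction_on (p := fun s => BddAbove (f '' s))
    (by simp) (fun s t hst h => h.mono (image_mono hst))
    (fun s t hs ht => by rw [image_union]; exact hs.union ht) ?_
  intro x hx
  have hR : ∃ u ∈ 𝓝[≥] x, BddAbove (f '' u) := by
    have h := (hf.1 x hx.1).eventually (gt_mem_nhds (lt_add_one (f x)))
    exact ⟨_, h, f x + 1, by rintro _ ⟨y, hy, rfl⟩; exact le_of_lt hy⟩
  obtain ⟨u, hu, hbu⟩ := hR
  rcases hx.1.eq_or_lt with h0 | h0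
  · subst h0
    exact ⟨u, nhdsWithin_mono _ Icc_subset_Ici_self hu, hbu⟩
  · obtain ⟨l, hl⟩ := hf.2 x h0
    have h := hl.eventually (gt_mem_nhds (lt_add_one l))
    refine ⟨u ∪ {y | f y < l + 1}, ?_, ?_⟩
    · apply mem_nhdsWithin_of_mem_nhds
      rw [← nhdsLT_sup_nhdsGE, mem_sup]
      exact ⟨mem_of_superset h subset_union_right, mem_of_superset hu subset_union_left⟩
    · rw [image_union]
      exact hbu.union ⟨l + 1, by rintro _ ⟨y, hy, rfl⟩; exact le_of_lt hy⟩

lemma cadlag_right_approx {f : ℝ → ℝ} (hf : IsCadlag f) {s b ε : ℝ} (hs : 0 ≤ s) (hb : s < b)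
    (hε : 0 < ε) : ∃ r : ℚ≥0, s < (r : ℝ) ∧ (r : ℝ) < b ∧ |f r - f s| < ε := by
  have h := (hf.1 s hs).eventually (Metric.ball_mem_nhds (f s) hε)
  obtain ⟨c, hc, hc'⟩ := (mem_nhdsGE_iff_exists_Ico_subset).1 h
  obtain ⟨r, hr1, hr2⟩ := exists_rat_btwn (lt_min hb hc)
  have hr0 : 0 ≤ r := by
    have : (0:ℝ) ≤ r := hs.trans hr1.le
    exact_mod_cast this
  lift r to ℚ≥0 using hr0
  have e : (((r:ℚ)) : ℝ) = (r : ℝ) := by simp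
  rw [e] at hr1 hr2
  refine ⟨r, hr1, hr2.trans_le (min_le_left _ _), ?_⟩
  have := hc' ⟨hr1.le, hr2.trans_le (min_le_right _ _)⟩
  simpa [Metric.mem_ball, Real.dist_eq] using this

/-- Countable-coordinates version of continuity of the running supremum. -/
def GoodB (g : ℚ≥0 → ℝ) : Prop :=
  ∀ N k : ℕ, ∃ m : ℕ, ∀ s r : ℚ≥0, s ≤ r → r ≤ N → (r : ℝ) < s + 1 / ((m : ℝ) + 1) →
    ∃ u : ℚ≥0, u ≤ s ∧ g r < g u + 1 / ((k : ℝ) + 1)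

lemma measurableSet_goodB : MeasurableSet {g : ℚ≥0 → ℝ | GoodB g} := by
  unfold GoodB
  simp only [ofPred_forall, ofPred_exists, ofPred_and]
  refine MeasurableSet.iInter fun N => MeasurableSet.iInter fun k => MeasurableSet.iUnion fun m =>
    MeasurableSet.iInter fun s => MeasurableSet.iInter fun r => MeasurableSet.iInter fun _ =>
    MeasurableSet.iInter fun _ => MeasurableSet.iInter fun _ => MeasurableSet.iUnion fun u =>
    (MeasurableSet.const _).inter ?_
  exact measurableSet_lt (measurable_pi_apply r) ((measurable_pi_apply u).add_const _)

lemma goodB_of_cont {f : ℝ → ℝ} (hf : IsCadlag f)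
    (hM : ContinuousOn (fun t => sSup (f '' Icc 0 t)) (Ici 0)) :
    GoodB (fun r : ℚ≥0 => f r) := by
  intro N k
  have huc := (isCompact_Icc (a := (0:ℝ)) (b := N)).uniformContinuousOn_of_continuous
    (hM.mono Icc_subset_Ici_self)
  rw [Metric.uniformContinuousOn_iff] at huc
  have hk : (0:ℝ) < 1 / ((k : ℝ) + 1) := by positivity
  set ε : ℝ := 1 / ((k : ℝ) + 1) with hε
  obtain ⟨δ, hδ, H⟩ := huc (ε / 3) (by positivity)
  obtain ⟨m, hm⟩ := exists_nat_one_div_lt hδ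
  refine ⟨m, fun s r hsr hrN hrs => ?_⟩
  have hsr' : (s : ℝ) ≤ r := by exact_mod_cast hsr
  have hrN' : (r : ℝ) ≤ N := by exact_mod_cast hrN
  have hs0 : (0:ℝ) ≤ s := by positivity
  have h1 := H r ⟨by positivity, hrN'⟩ s ⟨hs0, hsr'.trans hrN'⟩ (by
    rw [Real.dist_eq, abs_lt]; constructor <;> linarith)
  rw [Real.dist_eq, abs_lt] at h1
  have h2 : f r ≤ sSup (f '' Icc 0 (r:ℝ)) :=
    le_csSup (cadlag_bdd hf _) ⟨r, ⟨by positivity, le_rfl⟩, rfl⟩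
  obtain ⟨_, ⟨v, hv, rfl⟩, hv'⟩ := exists_lt_of_lt_csSup (s := f '' Icc 0 (s:ℝ))
    ⟨_, s, ⟨hs0, le_rfl⟩, rfl⟩ (show sSup (f '' Icc 0 (s:ℝ)) - ε/3 < _ by linarith)
  rcases hv.2.eq_or_lt with h | h
  · refine ⟨s, le_rfl, ?_⟩
    simp only at h1 ⊢
    rw [h] at hv'
    linarith
  · obtain ⟨u, hu1, hu2, hu3⟩ := cadlag_right_approx hf hv.1 h (show 0 < ε/3 by positivity)
    refine ⟨u, by exact_mod_cast hu2.le, ?_⟩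
    rw [abs_lt] at hu3
    simp only at h1 ⊢
    linarith

lemma noJump_of_goodB {f : ℝ → ℝ} (hf : IsCadlag f)
    (h : ∀ q : ℚ≥0, GoodB (fun r : ℚ≥0 => f (q + r) - f q)) (t : ℝ) (ht : 0 ≤ t) :
    f t ≤ leftLimAt f t := by
  unfold leftLimAt
  split_ifs with h0
  swap
  · exact le_rfl
  obtain ⟨l, hl⟩ := hf.2 t h0
  have hll : Function.leftLim f t = l := leftLim_eq_of_tendsto hl
  rw [hll]
  by_contra! hlt
  set ε := (f t - l) / 4 with hε
  have hε0 : 0 < ε := by rw [hε]; linarith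
  have hev := hl.eventually (gt_mem_nhds (show l < l + ε by linarith))
  obtain ⟨c, hc, hc'⟩ := (mem_nhdsLT_iff_exists_Ioo_subset).1 hev
  obtain ⟨q, hq1, hq2⟩ := exists_rat_btwn (max_lt h0 hc)
  have hq0 : 0 ≤ q := by
    have : (0:ℝ) ≤ q := (le_max_left _ _).trans hq1.le
    exact_mod_cast this
  lift q to ℚ≥0 using hq0
  have e : (((q:ℚ)) : ℝ) = (q : ℝ) := by simp
  rw [e] at hq1 hq2
  obtain ⟨N, hN⟩ := exists_nat_ge (t + 1)
  obtain ⟨k, hk⟩ := exists_nat_one_div_lt hε0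
  obtain ⟨m, hm⟩ := h q N k
  have hm0 : (0:ℝ) < 1 / ((m:ℝ) + 1) := by positivity
  have hm1 : 1 / ((m:ℝ) + 1) ≤ 1 := by
    rw [div_le_one (by positivity)]; linarith [(Nat.cast_nonneg m : (0:ℝ) ≤ m)]
  set η := 1 / ((m:ℝ) + 1) with hη
  obtain ⟨s, hs1, hs2⟩ := exists_rat_btwn (max_lt hq2 (show t - η/2 < t by linarith))
  obtain ⟨r, hr1, hr2, hr3⟩ := cadlag_right_approx hf h0.le (show t < t + η/2 by linarith) hε0
  have hqs : (q:ℝ) < s := (le_max_left _ _).trans_lt hs1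
  have hqs' : ((q:ℚ)) ≤ s := by
    have : (((q:ℚ)) : ℝ) ≤ s := by rw [e]; exact hqs.le
    exact_mod_cast this
  have hηs : t - η/2 < (s:ℝ) := (le_max_right _ _).trans_lt hs1
  obtain ⟨s', hs'⟩ : ∃ s' : ℚ≥0, (s':ℝ) = s - q := by
    have hz : 0 ≤ s - q := by linarith
    obtain ⟨z, hzz⟩ : ∃ z : ℚ≥0, (z : ℚ) = s - q := CanLift.prf _ hz
    refine ⟨z, ?_⟩
    have e2 : ((z : ℚ) : ℝ) = (z : ℝ) := by simp
    rw [← e2, hzz, Rat.cast_sub, e]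
  obtain ⟨r', hr'⟩ : ∃ r' : ℚ≥0, (r':ℝ) = r - q := by
    have h1 : (q:ℝ) ≤ r := by linarith
    have h2 : q ≤ r := by exact_mod_cast h1
    obtain ⟨r', rfl⟩ := exists_add_of_le h2
    exact ⟨r', by push_cast; ring⟩
  obtain ⟨u, hu1, hu2⟩ := hm s' r' (by
      have : (s':ℝ) ≤ r' := by rw [hs', hr']; linarith
      exact_mod_cast this) (by
      have : (r':ℝ) ≤ N := by rw [hr']; linarith [(by positivity : (0:ℝ) ≤ q)]
      exact_mod_cast this) (by rw [hs', hr']; linarith)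
  have hu1' : (u:ℝ) ≤ s' := by exact_mod_cast hu1
  have hfu := hc' (show (q + u : ℝ) ∈ Ioo c t from
    ⟨by linarith [(by positivity : (0:ℝ) ≤ u), le_max_right 0 c], by linarith⟩)
  simp only [mem_ofPred_eq] at hfu hu2
  rw [hr', show (q:ℝ) + (r - q) = r by ring] at hu2
  rw [abs_lt] at hr3
  linarith

lemma cont_of_noJump {f : ℝ → ℝ} (hf : IsCadlag f)
    (h : ∀ t, 0 ≤ t → f t ≤ leftLimAt f t) :
    ContinuousOn (fun t => sSup (f '' Icc 0 t)) (Ici 0) := by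
  intro t ht
  have ht : 0 ≤ t := ht
  set M := fun t => sSup (f '' Icc 0 t) with hMdef
  have hle : ∀ {v b : ℝ}, 0 ≤ v → v ≤ b → f v ≤ M b := fun hv hb =>
    le_csSup (cadlag_bdd hf _) ⟨_, ⟨hv, hb⟩, rfl⟩
  have hMle : ∀ {b C : ℝ}, 0 ≤ b → (∀ v, 0 ≤ v → v ≤ b → f v ≤ C) → M b ≤ C := by
    intro b C hb H
    refine csSup_le ⟨_, b, ⟨hb, le_rfl⟩, rfl⟩ ?_
    rintro _ ⟨v, hv, rfl⟩
    exact H v hv.1 hv.2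
  have hmono : ∀ {a b : ℝ}, 0 ≤ a → a ≤ b → M a ≤ M b := fun ha hab =>
    hMle ha fun v hv hva => hle hv (hva.trans hab)
  have hR : Tendsto M (𝓝[≥] t) (𝓝 (M t)) := by
    rw [Metric.tendsto_nhds]
    intro ε hε
    have hev := (hf.1 t ht).eventually (gt_mem_nhds (show f t < f t + ε/2 by linarith))
    obtain ⟨c, hc, hc'⟩ := (mem_nhdsGE_iff_exists_Ico_subset).1 hev
    filter_upwards [Ico_mem_nhdsGE (show t < c from hc)] with x hx
    have h1 : M x ≤ M t + ε/2 := by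
      refine hMle (ht.trans hx.1) fun v hv hvx => ?_
      rcases le_total v t with h2 | h2
      · linarith [hle hv h2]
      · have := hc' ⟨h2, hvx.trans_lt hx.2⟩
        simp only [mem_ofPred_eq] at this
        linarith [hle ht le_rfl]
    have h2 := hmono ht hx.1
    rw [Real.dist_eq, abs_lt]; constructor <;> linarith
  rcases ht.eq_or_lt with h0 | h0
  · rw [← h0] at hR ⊢; exact hR
  have hL : Tendsto M (𝓝[<] t) (𝓝 (M t)) := by
    obtain ⟨l, hl⟩ := hf.2 t h0
    have hll : Function.leftLim f t = l := leftLim_eq_of_tendsto hl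
    have hft := h t ht
    rw [leftLimAt, if_pos h0, hll] at hft
    rw [Metric.tendsto_nhds]
    intro ε hε
    have hev := hl.eventually (Metric.ball_mem_nhds l (show 0 < ε/4 by linarith))
    obtain ⟨c, hc, hc'⟩ := (mem_nhdsLT_iff_exists_Ioo_subset).1 hev
    filter_upwards [Ioo_mem_nhdsLT (max_lt h0 (show c < t from hc))] with x hx
    have hx0 : 0 < x := (le_max_left _ _).trans_lt hx.1
    have hxc : c < x := (le_max_right _ _).trans_lt hx.1
    have hfx := hc' ⟨hxc, hx.2⟩
    simp only [mem_ofPred_eq, Metric.mem_ball, Real.dist_eq, abs_lt] at hfx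
    have h1 : M t ≤ M x + ε/2 := by
      refine hMle ht fun v hv hvt => ?_
      rcases le_total v x with h2 | h2
      · linarith [hle hv h2]
      · have h3 := hle hx0.le le_rfl
        rcases hvt.eq_or_lt with h4 | h4
        · rw [h4]; linarith
        · have := hc' ⟨hxc.trans_le h2, h4⟩
          simp only [mem_ofPred_eq, Metric.mem_ball, Real.dist_eq, abs_lt] at this
          linarith
    have h2 := hmono hx0.le hx.2.le
    rw [Real.dist_eq, abs_lt]; constructor <;> linarith
  have : Tendsto M (𝓝 t) (𝓝 (M t)) := by
    rw [← nhdsLT_sup_nhdsGE]; exact hL.sup hR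
  exact this.mono_left nhdsWithin_le_nhds

section levy
variable {Ω : Type*} {m0 : MeasurableSpace Ω} {P : Measure Ω} {F : MeasureTheory.Filtration ℝ m0}
  {X : ℝ → Ω → ℝ}

lemma levy_meas (hX : IsLevy P F X) (t : ℝ) : Measurable (X t) :=
  (hX.adapted t).mono (F.le t) le_rfl

lemma levy_iIndep (hX : IsLevy P F X) (τ : ℕ → ℝ) (h0 : ∀ i, 0 ≤ τ i) (hτ : Monotone τ) :
    iIndepFun (fun (i : ℕ) ω => X (τ (i+1)) ω - X (τ i) ω) P := by
  have := hX.isProb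
  rw [iIndepFun_iff_measure_inter_preimage_eq_mul]
  intro S
  induction S using Finset.induction_on_max with
  | empty => intro sets _; simp
  | insert a s ha ih =>
    intro sets hsets
    have hna : a ∉ s := fun h => lt_irrefl _ (ha a h)
    rw [Finset.prod_insert hna, ← ih (fun i hi => hsets i (Finset.mem_insert_of_mem hi)),
      Finset.set_biInter_insert]
    have hi := hX.indep (τ a) (τ (a+1)) (h0 a) (hτ (Nat.le_succ a))
    rw [Indep_iff] at hi
    apply hi
    · exact ⟨sets a, hsets a (Finset.mem_insert_self _ _), rfl⟩
    · refine Finset.measurableSet_biInter (m := F (τ a)) s fun i his => ?_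
      have hia := ha i his
      have m1 : Measurable[F (τ a)] (X (τ (i+1))) :=
        (hX.adapted _).mono (F.mono (hτ hia)) le_rfl
      have m2 : Measurable[F (τ a)] (X (τ i)) :=
        (hX.adapted _).mono (F.mono (hτ hia.le)) le_rfl
      exact (m1.sub m2) (hsets i (Finset.mem_insert_of_mem his))

lemma levy_grid_law (hX : IsLevy P F X) (q h : ℝ) (hq : 0 ≤ q) (hh : 0 ≤ h) :
    P.map (fun ω (i : ℕ) => X (q + (i + 1 : ℕ) * h) ω - X (q + i * h) ω) =
      Measure.infinitePi (fun _ : ℕ => P.map (X h)) := by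
  have hind := levy_iIndep hX (fun i : ℕ => q + i * h) (fun i => by positivity)
    (fun i j hij => by
      have : (i:ℝ) ≤ j := by exact_mod_cast hij
      simp only
      gcongr)
  rw [hind.map_fun_eq_infinitePi_map
    (X := fun (i : ℕ) ω => X (q + (i + 1 : ℕ) * h) ω - X (q + i * h) ω)
    (fun i => (levy_meas hX _).sub (levy_meas hX _))]
  congr 1
  funext i
  rw [hX.statInc]
  · congr 2; push_cast; ring
  · positivity
  · push_cast; nlinarith

lemma levy_shift_law (hX : IsLevy P F X) (q : ℚ≥0) :
    P.map (fun ω (r : ℚ≥0) => X (q + r) ω - X q ω) =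
      P.map (fun ω (r : ℚ≥0) => X (0 + r) ω - X 0 ω) := by
  have := hX.isProb
  have hm : ∀ a : ℝ, Measurable (fun ω (r : ℚ≥0) => X (a + r) ω - X a ω) := fun a =>
    measurable_pi_lambda _ fun r => (levy_meas hX _).sub (levy_meas hX _)
  rw [map_eq_iff_forall_finset_map_restrict_eq (hm _).aemeasurable (hm _).aemeasurable]
  intro I
  set d : ℕ := ∏ r ∈ I, r.den with hd
  have hd0 : 0 < d := Finset.prod_pos fun r _ => r.den_pos
  have hk : ∀ r : I, ∃ k : ℕ, ((r : ℚ≥0) : ℝ) = k * (1 / (d:ℝ)) := by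
    rintro ⟨r, hr⟩
    obtain ⟨c, hc⟩ := Finset.dvd_prod_of_mem (fun r : ℚ≥0 => r.den) hr
    refine ⟨r.num * c, ?_⟩
    have hd1 : (d:ℝ) = r.den * c := by rw [hd]; exact_mod_cast hc
    have hdr : (0:ℝ) < d := by exact_mod_cast hd0
    have hden : (r.den:ℝ) ≠ 0 := by exact_mod_cast r.den_ne_zero
    have : (r:ℝ) = r.num / r.den := by rw [NNRat.cast_def]
    simp only
    rw [this]
    field_simp
    push_cast
    rw [hd1]; ring
  choose k hk using hk
  let Φ : (ℕ → ℝ) → (I → ℝ) := fun g r => ∑ i ∈ Finset.range (k r), g i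
  have hΦ : Measurable Φ := measurable_pi_lambda _ fun r =>
    Finset.measurable_sum _ fun i _ => measurable_pi_apply i
  have key : ∀ a : ℝ, 0 ≤ a →
      P.map (fun ω => I.restrict (fun r : ℚ≥0 => X (a + r) ω - X a ω)) =
      (Measure.infinitePi (fun _ : ℕ => P.map (X (1 / (d:ℝ))))).map Φ := by
    intro a ha
    rw [← levy_grid_law hX a (1 / (d:ℝ)) ha (by positivity), Measure.map_map
      (f := fun ω (i : ℕ) => X (a + (i + 1 : ℕ) * (1 / (d:ℝ))) ω - X (a + i * (1 / (d:ℝ))) ω) hΦ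
      (measurable_pi_lambda _ fun i => (levy_meas hX _).sub (levy_meas hX _))]
    congr 1
    funext ω r
    simp only [Finset.restrict, Function.comp, Φ]
    rw [Finset.sum_range_sub (fun i : ℕ => X (a + i * (1 / (d:ℝ))) ω), hk r]
    simp
  rw [key q (by positivity), key 0 le_rfl]

end levy

/-- The running supremum of a Lévy process is a.s. continuous (on `[0,∞)`) iff the
process a.s. has no positive jumps. -/
theorem runSup_continuous_iff_noPosJumps {Ω : Type*} {m0 : MeasurableSpace Ω}
    (P : Measure Ω) (F : MeasureTheory.Filtration ℝ m0) (X : ℝ → Ω → ℝ)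
    (hX : IsLevy P F X) :
    (∀ᵐ ω ∂P, ContinuousOn (fun t => runSup X t ω) (Set.Ici (0 : ℝ))) ↔
    (∀ᵐ ω ∂P, ∀ t : ℝ, 0 ≤ t → X t ω ≤ leftLimAt (fun u => X u ω) t) := by
  have := hX.isProb
  constructor
  · intro hc
    have h0 : ∀ᵐ ω ∂P, X 0 ω = 0 := by
      have hms : MeasurableSet {ω | X 0 ω = 0} := levy_meas hX 0 (measurableSet_singleton 0)
      exact (prob_compl_eq_zero_iff hms).2 hX.start
    have hm : ∀ a : ℝ, Measurable (fun ω (r : ℚ≥0) => X (a + r) ω - X a ω) := fun a =>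
      measurable_pi_lambda _ fun r => (levy_meas hX _).sub (levy_meas hX _)
    have hg0 : ∀ᵐ ω ∂P, GoodB (fun r : ℚ≥0 => X (0 + r) ω - X 0 ω) := by
      filter_upwards [hc, hX.cadlag, h0] with ω h1 h2 h3
      simpa [h3] using goodB_of_cont h2 h1
    have hgq : ∀ᵐ ω ∂P, ∀ q : ℚ≥0, GoodB (fun r : ℚ≥0 => X (q + r) ω - X q ω) := by
      rw [ae_all_iff]
      intro q
      have h1 := (ae_map_iff (hm 0).aemeasurable measurableSet_goodB).2 hg0
      rw [← levy_shift_law hX q] at h1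
      exact (ae_map_iff (hm q).aemeasurable measurableSet_goodB).1 h1
    filter_upwards [hgq, hX.cadlag] with ω h1 h2
    exact noJump_of_goodB h2 h1
  · intro hj
    filter_upwards [hj, hX.cadlag] with ω h1 h2
    exact cont_of_noJump h2 h1
end

section
/- Let ω : [0,∞) → ℝ be a càdlàg function with ω(0) = 0, and let ω̄(t) := sup{ω(s) : s ∈ [0,t]} be its running supremum. If ω̄ is not continuous on [0,∞), then there exists x > 0 such that T_x(ω) < ∞ and ω(T_x(ω)) > x. -/
open MeasureTheory ProbabilityTheory Filter Set
open scoped ENNReal Topology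

theorem cadlag_bdd_s5 (ω : ℝ → ℝ) (hω : IsCadlag ω) (t : ℝ) : BddAbove (ω '' Set.Icc 0 t) := by
  refine isCompact_Icc.induction_on (p := fun s => BddAbove (ω '' s)) (by simp)
    (fun s u hsu hu => hu.mono (Set.image_mono hsu))
    (fun s u hs hu => by rw [Set.image_union]; exact hs.union hu) ?_
  intro a ha
  have hR : ∀ᶠ s in 𝓝[≥] a, ω s ≤ ω a + 1 :=
    ((hω.1 a ha.1).eventually_lt_const (lt_add_one (ω a))).mono fun _ h => h.le
  have hL : ∃ C, ∀ᶠ s in 𝓝[<] a, 0 ≤ s → ω s ≤ C := by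
    rcases ha.1.eq_or_lt with h | h
    · refine ⟨0, ?_⟩
      filter_upwards [self_mem_nhdsWithin] with s hs h'
      have : s < a := hs
      linarith
    · obtain ⟨l, hl⟩ := hω.2 a h
      exact ⟨l + 1, (hl.eventually_lt_const (lt_add_one l)).mono fun _ h _ => h.le⟩
  obtain ⟨C, hC⟩ := hL
  have hall : ∀ᶠ s in 𝓝 a, 0 ≤ s → ω s ≤ max C (ω a + 1) := by
    rw [← nhdsLT_sup_nhdsGE, eventually_sup]
    exact ⟨hC.mono fun s h h' => (h h').trans (le_max_left _ _),
      hR.mono fun s h _ => h.trans (le_max_right _ _)⟩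
  refine ⟨{s | 0 ≤ s ∧ ω s ≤ max C (ω a + 1)}, ?_, max C (ω a + 1), ?_⟩
  · filter_upwards [mem_nhdsWithin_of_mem_nhds hall, self_mem_nhdsWithin] with s h1 h2
    exact ⟨h2.1, h1 h2.1⟩
  · rintro _ ⟨s, hs, rfl⟩
    exact hs.2

/-- If the running supremum of a càdlàg path started at `0` is not continuous on
`[0,∞)`, then the path strictly overshoots some level `x > 0` at its first passage. -/
theorem exists_overshoot_of_not_continuous_runSup (ω : ℝ → ℝ) (hω : IsCadlag ω)
    (h0 : ω 0 = 0)
    (h : ¬ ContinuousOn (fun t => sSup (ω '' Set.Icc 0 t)) (Set.Ici (0 : ℝ))) :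
    ∃ x : ℝ, 0 < x ∧ {t : ℝ | 0 ≤ t ∧ x ≤ ω t}.Nonempty ∧
      ω (sInf {t : ℝ | 0 ≤ t ∧ x ≤ ω t}) > x := by
  by_contra hno
  apply h
  set M : ℝ → ℝ := fun t => sSup (ω '' Set.Icc 0 t) with hM
  have hle : ∀ s t, 0 ≤ s → s ≤ t → ω s ≤ M t := fun s t hs hst =>
    le_csSup (cadlag_bdd_s5 ω hω t) ⟨s, ⟨hs, hst⟩, rfl⟩
  have hmono : ∀ s t, 0 ≤ s → s ≤ t → M s ≤ M t := fun s t hs hst =>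
    csSup_le_csSup (cadlag_bdd_s5 ω hω t) ⟨ω 0, 0, ⟨le_rfl, hs⟩, rfl⟩
      (Set.image_mono (Set.Icc_subset_Icc_right hst))
  intro t ht
  have ht : 0 ≤ t := ht
  refine tendsto_order.2 ⟨fun a ha => ?_, fun b hb => ?_⟩
  · by_cases hex : ∃ s, s < t ∧ 0 ≤ s ∧ a < M s
    · obtain ⟨s, hst, hs, has⟩ := hex
      filter_upwards [mem_nhdsWithin_of_mem_nhds (Ioi_mem_nhds hst)] with u hu
      exact has.trans_le (hmono s u hs (le_of_lt hu))
    · push Not at hex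
      rcases ht.eq_or_lt with h | htp
      · subst h
        filter_upwards [self_mem_nhdsWithin] with u hu
        exact ha.trans_le (hmono 0 u le_rfl hu)
      · exfalso
        apply hno
        have ha0 : 0 ≤ a := by
          have h1 := hex 0 htp le_rfl
          have h2 := hle 0 0 le_rfl le_rfl
          linarith
        obtain ⟨x, hax, hxM⟩ := exists_between ha
        have hlow : ∀ s, 0 ≤ s → s < t → ω s < x := fun s hs hst =>
          ((hle s s hs le_rfl).trans (hex s hst hs)).trans_lt hax
        obtain ⟨_, ⟨s, hs, rfl⟩, hxs⟩ := exists_lt_of_lt_csSup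
          (⟨ω 0, 0, ⟨le_rfl, ht⟩, rfl⟩ : (ω '' Set.Icc 0 t).Nonempty) hxM
        have hst : s = t := by
          by_contra hne
          exact absurd (hlow s hs.1 (lt_of_le_of_ne hs.2 hne)) (not_lt.2 hxs.le)
        subst hst
        have hinf : IsLeast {t : ℝ | 0 ≤ t ∧ x ≤ ω t} s :=
          ⟨⟨ht, hxs.le⟩, fun u hu => by
            by_contra hlt
            exact absurd (hlow u hu.1 (not_le.1 hlt)) (not_lt.2 hu.2)⟩
        refine ⟨x, ha0.trans_lt hax, ⟨s, hinf.1⟩, ?_⟩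
        rw [hinf.csInf_eq]
        exact hxs
  · obtain ⟨c, hc, hcb⟩ := exists_between hb
    have hR : ∀ᶠ s in 𝓝[≥] t, ω s < c :=
      (hω.1 t ht).eventually_lt_const ((hle t t ht le_rfl).trans_lt hc)
    obtain ⟨u, hu, hsub⟩ := (mem_nhdsGE_iff_exists_Ico_subset).1 hR
    filter_upwards [mem_nhdsWithin_of_mem_nhds (Iio_mem_nhds hu), self_mem_nhdsWithin] with s hs hs0
    refine lt_of_le_of_lt (csSup_le ⟨ω 0, 0, ⟨le_rfl, hs0⟩, rfl⟩ ?_) hcb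
    rintro _ ⟨r, hr, rfl⟩
    rcases le_total r t with h1 | h1
    · exact (hle r t hr.1 h1).trans hc.le
    · exact le_of_lt (hsub ⟨h1, hr.2.trans_lt hs⟩)
end

section
/- Let X be a real-valued Lévy process on a filtered probability space satisfying the usual conditions. For x ∈ ℝ and Borel B ⊆ ℝ, set Q^x(B) := P({X(T_x) ∈ B} ∩ {T_x < ∞}). Then for every b > 0, every c ∈ (0,b) and every Borel set A ⊆ ℝ: Q^b(A) = ∫ Q^{b−x}(A − x) dQ̄^c(x), where Q̄^c denotes the completion of the (subprobability) measure Q^c, the integrand x ↦ Q^{b−x}(A − x) being measurable with respect to the Q^c-completion of the Borel σ-field, and A − x := {a − x : a ∈ A}. -/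
open MeasureTheory ProbabilityTheory Filter Set
open scoped ENNReal Topology

/-- increments of the path after time `s`, at rational times -/
noncomputable def pathInc {Ω : Type*} (X : ℝ → Ω → ℝ) (s : ℝ) (ω : Ω) : ℚ≥0 → ℝ :=
  fun u => X (s + (u : ℝ)) ω - X s ω

lemma IsLevy.meas {Ω : Type*} {m0 : MeasurableSpace Ω} {P : Measure Ω}
    {F : MeasureTheory.Filtration ℝ m0} {X : ℝ → Ω → ℝ} (hX : IsLevy P F X) (t : ℝ) :
    Measurable (X t) := (hX.adapted t).mono (F.le t) le_rfl

lemma measurable_pathInc {Ω : Type*} {m0 : MeasurableSpace Ω} {P : Measure Ω}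
    {F : MeasureTheory.Filtration ℝ m0} {X : ℝ → Ω → ℝ} (hX : IsLevy P F X) (s : ℝ) :
    Measurable (pathInc X s) :=
  measurable_pi_lambda _ fun _ => (hX.meas _).sub (hX.meas _)

lemma incr_box {Ω : Type*} {m0 : MeasurableSpace Ω} {P : Measure Ω}
    {F : MeasureTheory.Filtration ℝ m0} {X : ℝ → Ω → ℝ} (hX : IsLevy P F X)
    (h : ℝ) (hh : 0 ≤ h) (n : ℕ) : ∀ (s : ℝ), 0 ≤ s → ∀ (G : Set Ω), MeasurableSet[F s] G →
      ∀ B : ℕ → Set ℝ, (∀ i, MeasurableSet (B i)) →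
      P (G ∩ {ω | ∀ i < n, X (s + (i + 1 : ℕ) * h) ω - X (s + (i : ℕ) * h) ω ∈ B i}) =
        P G * ∏ i ∈ Finset.range n, P.map (X h) (B i) := by
  induction n with
  | zero => intro s hs G hG B hB; simp
  | succ n ih =>
    intro s hs G hG B hB
    have hle : s ≤ s + h := by linarith
    have hG' : MeasurableSet[F (s + h)] (G ∩ (fun ω => X (s + h) ω - X s ω) ⁻¹' B 0) := by
      refine MeasurableSet.inter (F.mono hle _ hG) ?_
      exact (Measurable.sub (hX.adapted (s + h)) ((hX.adapted s).mono (F.mono hle) le_rfl)) (hB 0)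
    have key := ih (s + h) (by linarith) _ hG' (fun i => B (i + 1)) (fun i => hB _)
    have hind := (hX.indep s (s + h) hs hle)
    rw [Indep_iff] at hind
    have h2 := hind _ G ⟨B 0, hB 0, rfl⟩ hG
    have h3 : P ((fun ω => X (s + h) ω - X s ω) ⁻¹' B 0) = P.map (X h) (B 0) := by
      have hms : Measurable (fun ω => X (s + h) ω - X s ω) := (hX.meas _).sub (hX.meas _)
      rw [← Measure.map_apply hms (hB 0), hX.statInc s (s + h) hs hle]
      simp
    rw [inter_comm G, h2, h3] at key
    rw [Finset.prod_range_succ', ]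
    have e : (G ∩ {ω | ∀ i < n + 1, X (s + (i + 1 : ℕ) * h) ω - X (s + (i : ℕ) * h) ω ∈ B i})
      = (G ∩ (fun ω => X (s + h) ω - X s ω) ⁻¹' B 0) ∩ {ω | ∀ i < n, X (s + h + (i + 1 : ℕ) * h) ω - X (s + h + (i : ℕ) * h) ω ∈ B (i + 1)} := by
      have e1 : ∀ i : ℕ, s + h + (i : ℕ) * h = s + ((i + 1 : ℕ) : ℝ) * h := by
        intro i; push_cast; ring
      ext ω
      simp only [mem_inter_iff, mem_ofPred_eq, mem_preimage, and_assoc, e1]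
      constructor
      · rintro ⟨a, b⟩
        refine ⟨a, by simpa using b 0 (by omega), fun i hi => b (i + 1) (by omega)⟩
      · rintro ⟨a, b, c⟩
        refine ⟨a, fun i hi => ?_⟩
        rcases i with _ | i
        · simpa using b
        · exact c i (by omega)
    rw [e, inter_comm G, key]
    ring

lemma incr_law {Ω : Type*} {m0 : MeasurableSpace Ω} {P : Measure Ω}
    {F : MeasureTheory.Filtration ℝ m0} {X : ℝ → Ω → ℝ} (hX : IsLevy P F X)
    (h : ℝ) (hh : 0 ≤ h) (s : ℝ) (hs : 0 ≤ s) (G : Set Ω) (hG : MeasurableSet[F s] G)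
    [IsProbabilityMeasure P] [IsProbabilityMeasure (P.map (X h))] :
    (P.restrict G).map (fun ω (i : ℕ) => X (s + (i + 1 : ℕ) * h) ω - X (s + (i : ℕ) * h) ω) =
      P G • Measure.infinitePi (fun _ : ℕ => P.map (X h)) := by
  have hm : Measurable (fun ω (i : ℕ) => X (s + (i + 1 : ℕ) * h) ω - X (s + (i : ℕ) * h) ω) :=
    measurable_pi_lambda _ fun _ => (hX.meas _).sub (hX.meas _)
  have hG0 := F.le s _ hG
  by_cases h0 : P G = 0
  · simp [h0, Measure.restrict_eq_zero.2 h0]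
  have : (P G)⁻¹ • (P.restrict G).map
      (fun ω (i : ℕ) => X (s + (i + 1 : ℕ) * h) ω - X (s + (i : ℕ) * h) ω) =
        Measure.infinitePi (fun _ : ℕ => P.map (X h)) := by
    apply Measure.eq_infinitePi
    intro S t ht
    rw [Measure.smul_apply, Measure.map_apply hm (MeasurableSet.pi S.countable_toSet fun _ _ ↦ ht _),
      Measure.restrict_apply (hm (MeasurableSet.pi S.countable_toSet fun _ _ ↦ ht _)), inter_comm]
    have hb := incr_box hX h hh (S.sup id + 1) s hs G hG (fun i => if i ∈ S then t i else univ)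
      (fun i => by split_ifs; exacts [ht i, MeasurableSet.univ])
    have hlt : ∀ i ∈ S, i < S.sup id + 1 := fun i hi => Nat.lt_succ_of_le (Finset.le_sup (f := id) hi)
    have e : (fun ω (i : ℕ) => X (s + (i + 1 : ℕ) * h) ω - X (s + (i : ℕ) * h) ω) ⁻¹' (S : Set ℕ).pi t
       = {ω | ∀ i < S.sup id + 1, X (s + (i + 1 : ℕ) * h) ω - X (s + (i : ℕ) * h) ω ∈ (if i ∈ S then t i else univ)} := by
      ext ω
      simp only [mem_preimage, Set.mem_pi, mem_ofPred_eq, Finset.mem_coe]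
      constructor
      · intro H i hi
        split_ifs with h1
        · exact H i h1
        · trivial
      · intro H i hi
        have := H i (hlt i hi)
        rwa [if_pos hi] at this
    rw [e, hb, smul_eq_mul, ← mul_assoc, ENNReal.inv_mul_cancel h0 (measure_ne_top _ _), one_mul]
    have hsub : S ⊆ Finset.range (S.sup id + 1) := fun i hi => Finset.mem_range.2 (hlt i hi)
    rw [← Finset.prod_subset hsub (f := fun i => P.map (X h) (if i ∈ S then t i else univ))]
    · exact Finset.prod_congr rfl fun i hi => by rw [if_pos hi]
    · intro i _ hi; rw [if_neg hi]; simp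
  rw [← this, smul_smul, ENNReal.mul_inv_cancel h0 (measure_ne_top _ _), one_smul]

lemma simple_markov {Ω : Type*} {m0 : MeasurableSpace Ω} {P : Measure Ω}
    {F : MeasureTheory.Filtration ℝ m0} {X : ℝ → Ω → ℝ} (hX : IsLevy P F X)
    (s : ℝ) (hs : 0 ≤ s) (G : Set Ω) (hG : MeasurableSet[F s] G) :
    (P.restrict G).map (pathInc X s) = P G • P.map (pathInc X 0) := by
  have := hX.isProb
  have : IsFiniteMeasure (P G • P.map (pathInc X 0)) :=
    Measure.smul_finite _ (measure_ne_top _ _)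
  refine IsProjectiveLimit.unique (P := fun I => (P G • P.map (pathInc X 0)).map I.restrict) ?_ (fun I => rfl)
  intro I
  set N : ℕ := ∏ u ∈ I, u.den with hN
  have hNpos : (0 : ℝ) < N := by
    rw [hN]; exact_mod_cast Finset.prod_pos fun u _ => NNRat.den_pos u
  have hdiv : ∀ u ∈ I, ∃ k : ℕ, (u : ℝ) = k * (1 / N : ℝ) := by
    intro u hu
    obtain ⟨d, hd⟩ := Finset.dvd_prod_of_mem (fun u : ℚ≥0 => u.den) hu
    refine ⟨u.num * d, ?_⟩
    have h1 : (u : ℝ) = u.num / u.den := by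
      have := NNRat.num_div_den u
      rw [NNRat.cast_def]
    have hd' : (N : ℝ) = u.den * d := by rw [hN, hd]; push_cast; rfl
    have : (u.den : ℝ) ≠ 0 := by exact_mod_cast NNRat.den_ne_zero u
    have : (d : ℝ) ≠ 0 := by
      rintro h; rw [hd', h] at hNpos; simp at hNpos
    rw [h1, hd']; push_cast; field_simp
  choose! K hK using hdiv
  set h : ℝ := 1 / N
  have hh : 0 ≤ h := by positivity
  have : IsProbabilityMeasure (P.map (X h)) :=
    Measure.isProbabilityMeasure_map (hX.meas h).aemeasurable
  let φ : (ℕ → ℝ) → (I → ℝ) := fun w u => ∑ k ∈ Finset.range (K u), w k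
  have hφ : Measurable φ := by
    refine measurable_pi_lambda _ fun u => ?_
    exact Finset.measurable_sum _ fun k _ => measurable_pi_apply k
  have hfac : ∀ r : ℝ, (I.restrict ∘ pathInc X r) =
      φ ∘ (fun ω (i : ℕ) => X (r + (i + 1 : ℕ) * h) ω - X (r + (i : ℕ) * h) ω) := by
    intro r
    ext ω u
    simp only [Function.comp_apply, Finset.restrict, pathInc, φ]
    rw [Finset.sum_range_sub (fun i : ℕ => X (r + i * h) ω), hK u u.2]
    simp
  have hm : ∀ s, Measurable (fun ω (i : ℕ) => X (s + (i + 1 : ℕ) * h) ω - X (s + (i : ℕ) * h) ω) :=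
    fun s => measurable_pi_lambda _ fun _ => (hX.meas _).sub (hX.meas _)
  have hr : Measurable (I.restrict : (ℚ≥0 → ℝ) → _) := Finset.measurable_restrict I
  have h1 := incr_law hX h hh s hs G hG
  have h2 := incr_law hX h hh 0 le_rfl univ MeasurableSet.univ
  simp only [Measure.restrict_univ, measure_univ, one_smul] at h2
  rw [Measure.map_map hr (measurable_pathInc hX s), hfac, ← Measure.map_map hφ (hm s), h1]
  change _ = Measure.map I.restrict (P G • Measure.map (pathInc X 0) P)
  rw [Measure.map_smul, Measure.map_smul, Measure.map_map hr (measurable_pathInc hX 0), hfac, ← Measure.map_map hφ (hm 0), h2]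

noncomputable def tauQ (a : ℝ) (z : ℚ≥0 → ℝ) : ℝ≥0∞ :=
  ⨅ u : ℚ≥0, if a < z u then ENNReal.ofReal (u : ℝ) else ⊤

noncomputable def supQ (x : ℝ) (z : ℚ≥0 → ℝ) : ℝ≥0∞ :=
  ⨆ n : ℕ, tauQ (x - 1 / ((n : ℝ) + 1)) z

noncomputable def rhoQ (m : ℕ) (t : ℝ) : ℚ≥0 :=
  ((⌊((m : ℝ) + 1) * t⌋₊ + 1 : ℕ) : ℚ≥0) / ((m + 1 : ℕ) : ℚ≥0)

noncomputable def valQ (x : ℝ) (z : ℚ≥0 → ℝ) : ℝ :=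
  limsup (fun m : ℕ => z (rhoQ m (supQ x z).toReal)) atTop

def RC (f : ℝ → ℝ) : Prop := ∀ t : ℝ, 0 ≤ t → ContinuousWithinAt f (Set.Ici t) t

lemma rhoQ_cast (m : ℕ) (t : ℝ) :
    ((rhoQ m t : ℚ≥0) : ℝ) = ((⌊((m : ℝ) + 1) * t⌋₊ : ℝ) + 1) / ((m : ℝ) + 1) := by
  simp [rhoQ]

lemma lt_rhoQ (m : ℕ) (t : ℝ) : t < rhoQ m t := by
  rw [rhoQ_cast, lt_div_iff₀ (by positivity), mul_comm]
  exact Nat.lt_floor_add_one _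

lemma rhoQ_le (m : ℕ) (t : ℝ) (ht : 0 ≤ t) : (rhoQ m t : ℝ) ≤ t + 1 / ((m : ℝ) + 1) := by
  have hm : (0 : ℝ) < (m : ℝ) + 1 := by positivity
  rw [rhoQ_cast, div_le_iff₀ hm]
  have := Nat.floor_le (a := ((m : ℝ) + 1) * t) (by positivity)
  have h2 : (t + 1 / ((m : ℝ) + 1)) * ((m : ℝ) + 1) = ((m : ℝ) + 1) * t + 1 := by field_simp
  rw [h2]; linarith

lemma tendsto_rhoQ (t : ℝ) (ht : 0 ≤ t) :
    Tendsto (fun m => (rhoQ m t : ℝ)) atTop (𝓝[≥] t) := by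
  apply tendsto_nhdsWithin_of_tendsto_nhds_of_eventually_within
  · refine tendsto_of_tendsto_of_tendsto_of_le_of_le (g := fun _ => t)
      (h := fun m : ℕ => t + 1 / ((m : ℝ) + 1)) tendsto_const_nhds ?_ (fun m => (lt_rhoQ m t).le)
      (fun m => rhoQ_le m t ht)
    simpa using (tendsto_const_nhds (x := t)).add (tendsto_one_div_add_atTop_nhds_zero_nat (𝕜 := ℝ))
  · exact Eventually.of_forall fun m => (lt_rhoQ m t).le

lemma RC.tendsto_rho {f : ℝ → ℝ} (hf : RC f) {t : ℝ} (ht : 0 ≤ t) :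
    Tendsto (fun m => f (rhoQ m t)) atTop (𝓝 (f t)) :=
  Tendsto.comp (hf t ht) (tendsto_rhoQ t ht)

lemma RC.exists_rat {f : ℝ → ℝ} (hf : RC f) {t : ℝ} (ht : 0 ≤ t) {U : Set ℝ} (hU : U ∈ 𝓝 (f t))
    {r : ℝ} (hr : t < r) : ∃ u : ℚ≥0, t < u ∧ (u : ℝ) < r ∧ f u ∈ U := by
  have h1 := (hf.tendsto_rho ht) hU
  have h2 := ((tendsto_rhoQ t ht).mono_right nhdsWithin_le_nhds) (Iio_mem_nhds hr)
  rw [Filter.mem_map] at h1 h2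
  obtain ⟨m, hm1, hm2⟩ := Filter.nonempty_of_mem (Filter.inter_mem h1 h2)
  exact ⟨rhoQ m t, lt_rhoQ m t, hm2, hm1⟩

lemma RC.shift {f : ℝ → ℝ} (hf : RC f) {s : ℝ} (hs : 0 ≤ s) : RC (fun u => f (s + u) - f s) := by
  intro t ht
  refine ContinuousWithinAt.sub ?_ continuousWithinAt_const
  refine ContinuousWithinAt.comp (t := Ici (s + t)) (hf (s + t) (by positivity)) ?_ ?_
  · exact (continuous_const.add continuous_id).continuousWithinAt
  · intro x hx
    simp only [mem_Ici] at *
    linarith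

lemma tauQ_le_of_lt {a : ℝ} {z : ℚ≥0 → ℝ} {u : ℚ≥0} (h : a < z u) :
    tauQ a z ≤ ENNReal.ofReal u := by
  refine (iInf_le _ u).trans ?_
  rw [if_pos h]

lemma tauQ_le {f : ℝ → ℝ} (hf : RC f) {t : ℝ} (ht : 0 ≤ t) {a : ℝ} (h : a < f t) :
    tauQ a (fun u => f u) ≤ ENNReal.ofReal t := by
  refine ENNReal.le_of_forall_pos_le_add fun ε hε _ => ?_
  obtain ⟨u, hu1, hu2, hu3⟩ := hf.exists_rat ht (Ioi_mem_nhds h) (r := t + ε) (by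
    have : (0 : ℝ) < ε := hε
    linarith)
  refine (tauQ_le_of_lt (z := fun u : ℚ≥0 => f u) hu3).trans ?_
  refine (ENNReal.ofReal_le_ofReal hu2.le).trans ?_
  rw [ENNReal.ofReal_add ht (NNReal.coe_nonneg ε), ENNReal.ofReal_coe_nnreal]

lemma exists_of_tauQ_lt {a : ℝ} {z : ℚ≥0 → ℝ} {R : ℝ≥0∞} (h : tauQ a z < R) :
    ∃ u : ℚ≥0, a < z u ∧ ENNReal.ofReal u < R := by
  obtain ⟨u, hu⟩ := iInf_lt_iff.1 h
  split_ifs at hu with h1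
  · exact ⟨u, h1, hu⟩
  · simp at hu

lemma le_at_tauQ {f : ℝ → ℝ} (hf : RC f) {a : ℝ} (h : tauQ a (fun u => f u) ≠ ⊤) :
    a ≤ f (tauQ a (fun u => f u)).toReal := by
  set s := (tauQ a (fun u => f u)).toReal with hs
  have hs0 : 0 ≤ s := ENNReal.toReal_nonneg
  by_contra! hlt
  have := hf s hs0 (Iio_mem_nhds hlt)
  rw [Filter.mem_map, mem_nhdsGE_iff_exists_Ico_subset] at this
  obtain ⟨v, hv, hsub⟩ := this
  have h1 : tauQ a (fun u => f u) < ENNReal.ofReal v := by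
    rw [← ENNReal.ofReal_toReal h, ← hs]
    exact (ENNReal.ofReal_lt_ofReal_iff_of_nonneg hs0).2 hv
  obtain ⟨u, hu1, hu2⟩ := exists_of_tauQ_lt h1
  have h3 := tauQ_le_of_lt (z := fun u : ℚ≥0 => f u) hu1
  have h4 : s ≤ u := by
    rw [hs]; exact ENNReal.toReal_le_of_le_ofReal (by positivity) h3
  have h5 : (u : ℝ) < v := (ENNReal.ofReal_lt_ofReal_iff_of_nonneg (by positivity)).1 hu2
  have h6 : f u < a := hsub ⟨h4, h5⟩
  exact absurd hu1 (not_lt.2 h6.le)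

lemma tauQ_shift {f : ℝ → ℝ} (hf : RC f) {a s : ℝ} (hs : 0 ≤ s)
    (h : ∀ r, 0 ≤ r → r < s → f r ≤ a) :
    tauQ a (fun u => f u) = ENNReal.ofReal s + tauQ (a - f s) (fun u => f (s + u) - f s) := by
  apply le_antisymm
  · conv_rhs => rw [tauQ, ENNReal.add_iInf]
    refine le_iInf fun u => ?_
    split_ifs with h1
    · rw [← ENNReal.ofReal_add hs (by positivity)]
      exact tauQ_le hf (by positivity) (by linarith)
    · simp
  · conv_rhs => rw [tauQ]
    refine le_iInf fun u => ?_
    split_ifs with h1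
    · have hsu : s ≤ u := by
        by_contra! hlt
        exact absurd (h u (by positivity) hlt) (not_le.2 h1)
      have h2 := tauQ_le (hf.shift hs) (t := u - s) (by linarith) (a := a - f s) (by
        simp only [add_sub_cancel]; linarith)
      calc _ ≤ ENNReal.ofReal s + ENNReal.ofReal (u - s) := by gcongr
        _ = _ := by rw [← ENNReal.ofReal_add hs (by linarith)]; simp
    · exact le_top

lemma tauQ_mono (z : ℚ≥0 → ℝ) : Monotone (fun a => tauQ a z) := by
  intro a b hab
  refine iInf_mono fun u => ?_
  by_cases h : b < z u
  · rw [if_pos h, if_pos (lt_of_le_of_lt hab h)]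
  · rw [if_neg h]; exact le_top

lemma tauQ_seq_mono (x : ℝ) (z : ℚ≥0 → ℝ) :
    Monotone (fun n : ℕ => tauQ (x - 1 / ((n : ℝ) + 1)) z) := by
  intro n m hnm
  apply tauQ_mono
  have : 1 / ((m : ℝ) + 1) ≤ 1 / ((n : ℝ) + 1) := by
    apply one_div_le_one_div_of_le (by positivity)
    have : (n : ℝ) ≤ m := by exact_mod_cast hnm
    linarith
  linarith

lemma supQ_mono (z : ℚ≥0 → ℝ) : Monotone (fun a => supQ a z) := by
  intro a b hab
  refine iSup_mono fun n => tauQ_mono z ?_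
  linarith

lemma supQ_le {f : ℝ → ℝ} (hf : RC f) {t : ℝ} (ht : 0 ≤ t) {x : ℝ} (h : x ≤ f t) :
    supQ x (fun u => f u) ≤ ENNReal.ofReal t := by
  refine iSup_le fun n => tauQ_le hf ht ?_
  have : 0 < 1 / ((n : ℝ) + 1) := by positivity
  linarith

lemma supQ_shift {f : ℝ → ℝ} (hf : RC f) {b c : ℝ} (hcb : c < b)
    (s : ℝ) (hs : s = (supQ c (fun u => f u)).toReal) :
    supQ b (fun u => f u) = ENNReal.ofReal s + supQ (b - f s) (fun u => f (s + u) - f s) := by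
  have hs0 : 0 ≤ s := hs ▸ ENNReal.toReal_nonneg
  have hle : ∀ r, 0 ≤ r → r < s → f r ≤ c := by
    intro r hr hrs
    by_contra! h
    have := supQ_le hf hr h.le
    have := ENNReal.toReal_le_of_le_ofReal hr this
    linarith
  obtain ⟨N, hN⟩ := exists_nat_one_div_lt (sub_pos.2 hcb)
  rw [supQ, supQ, ← (tauQ_seq_mono b _).iSup_nat_add N, ← (tauQ_seq_mono (b - f s) _).iSup_nat_add N,
    ENNReal.add_iSup]
  refine iSup_congr fun n => ?_
  rw [tauQ_shift hf hs0 (a := b - 1 / (((n + N : ℕ) : ℝ) + 1)), sub_right_comm]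
  intro r hr hrs
  refine (hle r hr hrs).trans ?_
  have : 1 / (((n + N : ℕ) : ℝ) + 1) ≤ 1 / ((N : ℝ) + 1) := by
    apply one_div_le_one_div_of_le (by positivity)
    push_cast
    have : (0 : ℝ) ≤ n := by positivity
    linarith
  linarith

lemma valQ_eq {f : ℝ → ℝ} (hf : RC f) (x : ℝ) :
    valQ x (fun u => f u) = f (supQ x (fun u => f u)).toReal :=
  (hf.tendsto_rho ENNReal.toReal_nonneg).limsup_eq

lemma measurable_tauQ : Measurable (fun p : ℝ × (ℚ≥0 → ℝ) => tauQ p.1 p.2) := by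
  refine Measurable.iInf fun u => ?_
  refine Measurable.ite ?_ measurable_const measurable_const
  exact measurableSet_lt measurable_fst ((measurable_pi_apply u).comp measurable_snd)

lemma measurable_supQ : Measurable (fun p : ℝ × (ℚ≥0 → ℝ) => supQ p.1 p.2) := by
  refine Measurable.iSup fun n => ?_
  exact measurable_tauQ.comp ((measurable_fst.sub measurable_const).prodMk measurable_snd)

lemma measurable_valQ : Measurable (fun p : ℝ × (ℚ≥0 → ℝ) => valQ p.1 p.2) := by
  refine Measurable.limsup fun m => ?_
  have h1 : Measurable (fun q : ℕ × (ℚ≥0 → ℝ) =>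
      q.2 (((q.1 + 1 : ℕ) : ℚ≥0) / ((m + 1 : ℕ) : ℚ≥0))) :=
    measurable_from_prod_countable_right fun k =>
      measurable_pi_apply (((k + 1 : ℕ) : ℚ≥0) / ((m + 1 : ℕ) : ℚ≥0))
  have h2 : Measurable (fun p : ℝ × (ℚ≥0 → ℝ) =>
      (⌊((m : ℝ) + 1) * (supQ p.1 p.2).toReal⌋₊, p.2)) := by
    refine Measurable.prodMk ?_ measurable_snd
    exact Nat.measurable_floor.comp (measurable_supQ.ennreal_toReal.const_mul _)
  exact h1.comp h2

/-- optional time -/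
def OptT {Ω : Type*} {m0 : MeasurableSpace Ω} (F : MeasureTheory.Filtration ℝ m0)
    (T : Ω → ℝ≥0∞) : Prop :=
  ∀ t : ℝ, 0 ≤ t → MeasurableSet[F t] {ω | T ω < ENNReal.ofReal t}

lemma OptT.measurable {Ω : Type*} {m0 : MeasurableSpace Ω} {F : MeasureTheory.Filtration ℝ m0}
    {T : Ω → ℝ≥0∞} (hT : OptT F T) : Measurable T := by
  have h1 : ∀ t : ℝ, 0 ≤ t → MeasurableSet {ω | T ω < ENNReal.ofReal t} :=
    fun t ht => F.le t _ (hT t ht)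
  refine measurable_of_Iio fun x => ?_
  by_cases hx : x = ⊤
  · have : T ⁻¹' Iio x = ⋃ n : ℕ, {ω | T ω < ENNReal.ofReal n} := by
      ext ω
      simp only [hx, mem_preimage, mem_Iio, mem_iUnion, mem_ofPred_eq, ENNReal.ofReal_natCast]
      constructor
      · intro h; exact ENNReal.exists_nat_gt h.ne
      · rintro ⟨n, hn⟩; exact hn.trans (ENNReal.natCast_lt_top n)
    rw [this]
    exact MeasurableSet.iUnion fun n => h1 n (by positivity)
  · have := h1 x.toReal ENNReal.toReal_nonneg
    rw [ENNReal.ofReal_toReal hx] at this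
    exact this

lemma measurable_at_rho {Ω : Type*} {m0 : MeasurableSpace Ω} {P : Measure Ω}
    {F : MeasureTheory.Filtration ℝ m0} {X : ℝ → Ω → ℝ} (hX : IsLevy P F X)
    {T : Ω → ℝ≥0∞} (hT : Measurable T) (m : ℕ) (v : ℝ) :
    Measurable (fun ω => X ((rhoQ m (T ω).toReal : ℝ) + v) ω) := by
  obtain ⟨g, hg⟩ : ∃ g : ℕ → ℚ≥0, ∀ t, rhoQ m t = g ⌊((m : ℝ) + 1) * t⌋₊ :=
    ⟨fun k => ((k + 1 : ℕ) : ℚ≥0) / ((m + 1 : ℕ) : ℚ≥0), fun t => rfl⟩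
  simp only [hg]
  have h1 : Measurable (fun q : ℕ × Ω => X ((g q.1 : ℝ) + v) q.2) :=
    measurable_from_prod_countable_right fun k => hX.meas ((g k : ℝ) + v)
  have h2 : Measurable (fun ω => (⌊((m : ℝ) + 1) * (T ω).toReal⌋₊, ω)) := by
    refine Measurable.prodMk ?_ measurable_id
    exact Nat.measurable_floor.comp (hT.ennreal_toReal.const_mul _)
  exact h1.comp h2

lemma disc_markov {Ω : Type*} {m0 : MeasurableSpace Ω} {P : Measure Ω}
    {F : MeasureTheory.Filtration ℝ m0} {X : ℝ → Ω → ℝ} (hX : IsLevy P F X)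
    {T : Ω → ℝ≥0∞} (hT : OptT F T) (m : ℕ) {B : Set ℝ} (hB : MeasurableSet B)
    {C : Set (ℚ≥0 → ℝ)} (hC : MeasurableSet C) :
    P {ω | T ω < ⊤ ∧ X (rhoQ m (T ω).toReal) ω ∈ B ∧ pathInc X (rhoQ m (T ω).toReal) ω ∈ C} =
      P {ω | T ω < ⊤ ∧ X (rhoQ m (T ω).toReal) ω ∈ B} * P.map (pathInc X 0) C := by
  let q : ℕ → ℝ := fun j => (j : ℝ) / ((m : ℝ) + 1)
  have hm : (0 : ℝ) < (m : ℝ) + 1 := by positivity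
  have hq0 : ∀ j, 0 ≤ q j := fun j => by positivity
  have hqm : ∀ j, q j ≤ q (j + 1) := fun j => by
    simp only [q]; push_cast; gcongr; linarith
  let D : ℕ → Set Ω := fun j =>
    {ω | T ω < ENNReal.ofReal (q (j + 1))} \ {ω | T ω < ENNReal.ofReal (q j)}
  have hD : ∀ j ω, ω ∈ D j ↔ (T ω < ⊤ ∧ ⌊((m : ℝ) + 1) * (T ω).toReal⌋₊ = j) := by
    intro j ω
    simp only [D, Set.mem_sdiff, mem_ofPred_eq, not_lt]
    by_cases hfin : T ω = ⊤
    · simp [hfin]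
    have hn : 0 ≤ ((m : ℝ) + 1) * (T ω).toReal := by positivity
    rw [Nat.floor_eq_iff hn, ENNReal.lt_ofReal_iff_toReal_lt hfin,
      ENNReal.ofReal_le_iff_le_toReal hfin]
    simp only [q]
    rw [lt_div_iff₀ hm, div_le_iff₀ hm]
    push_cast
    constructor
    · rintro ⟨h1, h2⟩; exact ⟨lt_top_iff_ne_top.2 hfin, by linarith, by linarith⟩
    · rintro ⟨h0, h1, h2⟩; exact ⟨by linarith, by linarith⟩
  have hrho : ∀ j ω, ω ∈ D j → (rhoQ m (T ω).toReal : ℝ) = q (j + 1) := by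
    intro j ω h
    rw [rhoQ_cast, ((hD j ω).1 h).2]; simp [q]
  let A : ℕ → Set Ω := fun j => D j ∩ X (q (j + 1)) ⁻¹' B
  have hA : ∀ j, MeasurableSet[F (q (j + 1))] (A j) := by
    intro j
    refine MeasurableSet.inter (MeasurableSet.diff (hT _ (hq0 _)) ?_) (hX.adapted _ hB)
    exact F.mono (hqm j) _ (hT _ (hq0 _))
  have hA0 : ∀ j, MeasurableSet (A j) := fun j => F.le _ _ (hA j)
  have hdisj : Pairwise (Function.onFun Disjoint A) := by
    intro i j hij
    refine Set.disjoint_left.2 fun ω hi hj => hij ?_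
    rw [← ((hD i ω).1 hi.1).2, ← ((hD j ω).1 hj.1).2]
  have e2 : {ω | T ω < ⊤ ∧ X (rhoQ m (T ω).toReal) ω ∈ B} = ⋃ j, A j := by
    ext ω
    simp only [mem_ofPred_eq, mem_iUnion]
    constructor
    · rintro ⟨h1, h2⟩
      have := (hD _ ω).2 ⟨h1, rfl⟩
      refine ⟨_, this, ?_⟩
      rw [hrho _ ω this] at h2
      exact h2
    · rintro ⟨j, h1, h2⟩
      refine ⟨((hD j ω).1 h1).1, ?_⟩
      rw [hrho _ ω h1]
      exact h2
  have e1 : {ω | T ω < ⊤ ∧ X (rhoQ m (T ω).toReal) ω ∈ B ∧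
      pathInc X (rhoQ m (T ω).toReal) ω ∈ C} = ⋃ j, (pathInc X (q (j + 1)) ⁻¹' C ∩ A j) := by
    ext ω
    simp only [mem_ofPred_eq, mem_iUnion]
    constructor
    · rintro ⟨h1, h2, h3⟩
      have := (hD _ ω).2 ⟨h1, rfl⟩
      rw [hrho _ ω this] at h2 h3
      exact ⟨_, h3, this, h2⟩
    · rintro ⟨j, h3, h1, h2⟩
      refine ⟨((hD j ω).1 h1).1, ?_⟩
      rw [hrho _ ω h1]
      exact ⟨h2, h3⟩
  rw [e1, e2, measure_iUnion (fun i j hij => ((hdisj hij).mono inter_subset_right inter_subset_right))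
    (fun j => (measurable_pathInc hX _ hC).inter (hA0 j)), measure_iUnion hdisj hA0,
    ← ENNReal.tsum_mul_right]
  refine tsum_congr fun j => ?_
  have := congrArg (fun ν : Measure (ℚ≥0 → ℝ) => ν C) (simple_markov hX (q (j + 1)) (hq0 _) (A j) (hA j))
  simp only [Measure.smul_apply, smul_eq_mul] at this
  rw [Measure.map_apply (measurable_pathInc hX _) hC,
    Measure.restrict_apply (measurable_pathInc hX _ hC)] at this
  exact this

lemma tendsto_at_rho {f : ℝ → ℝ} (hf : RC f) {t : ℝ} (ht : 0 ≤ t) {v : ℝ} (hv : 0 ≤ v) :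
    Tendsto (fun m => f (rhoQ m t + v)) atTop (𝓝 (f (t + v))) := by
  refine Tendsto.comp (y := 𝓝[≥] (t + v)) (hf (t + v) (by positivity)) ?_
  apply tendsto_nhdsWithin_of_tendsto_nhds_of_eventually_within
  · exact ((tendsto_rhoQ t ht).mono_right nhdsWithin_le_nhds).add_const v
  · exact Eventually.of_forall fun m => by
      have := lt_rhoQ m t
      simp only [mem_Ici]; linarith

lemma IsLevy.ae_rc {Ω : Type*} {m0 : MeasurableSpace Ω} {P : Measure Ω}
    {F : MeasureTheory.Filtration ℝ m0} {X : ℝ → Ω → ℝ} (hX : IsLevy P F X) :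
    ∀ᵐ ω ∂P, RC (fun t => X t ω) := by
  filter_upwards [hX.cadlag] with ω h using h.1

lemma aemeas_at {Ω : Type*} {m0 : MeasurableSpace Ω} {P : Measure Ω}
    {F : MeasureTheory.Filtration ℝ m0} {X : ℝ → Ω → ℝ} (hX : IsLevy P F X)
    {T : Ω → ℝ≥0∞} (hT : Measurable T) {v : ℝ} (hv : 0 ≤ v) :
    AEMeasurable (fun ω => X ((T ω).toReal + v) ω) P := by
  refine aemeasurable_of_tendsto_metrizable_ae atTop
    (f := fun (m : ℕ) ω => X (rhoQ m (T ω).toReal + v) ω)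
    (fun m => (measurable_at_rho hX hT m v).aemeasurable) ?_
  filter_upwards [hX.ae_rc] with ω h
  exact tendsto_at_rho h ENNReal.toReal_nonneg hv

lemma aemeas_at_zero {Ω : Type*} {m0 : MeasurableSpace Ω} {P : Measure Ω}
    {F : MeasureTheory.Filtration ℝ m0} {X : ℝ → Ω → ℝ} (hX : IsLevy P F X)
    {T : Ω → ℝ≥0∞} (hT : Measurable T) :
    AEMeasurable (fun ω => X (T ω).toReal ω) P := by
  simpa using aemeas_at hX hT le_rfl

lemma aemeas_path {Ω : Type*} {m0 : MeasurableSpace Ω} {P : Measure Ω}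
    {F : MeasureTheory.Filtration ℝ m0} {X : ℝ → Ω → ℝ} (hX : IsLevy P F X)
    {T : Ω → ℝ≥0∞} (hT : Measurable T) :
    AEMeasurable (fun ω => pathInc X (T ω).toReal ω) P := by
  refine aemeasurable_pi_lambda _ fun u => ?_
  exact (aemeas_at hX hT (by positivity)).sub (aemeas_at_zero hX hT)

lemma strong_markov {Ω : Type*} {m0 : MeasurableSpace Ω} {P : Measure Ω}
    {F : MeasureTheory.Filtration ℝ m0} {X : ℝ → Ω → ℝ} (hX : IsLevy P F X)
    {T : Ω → ℝ≥0∞} (hT : OptT F T) :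
    (P.restrict {ω | T ω < ⊤}).map (fun ω => (X (T ω).toReal ω, pathInc X (T ω).toReal ω)) =
      ((P.restrict {ω | T ω < ⊤}).map (fun ω => X (T ω).toReal ω)).prod
        (P.map (pathInc X 0)) := by
  have := hX.isProb
  have : IsProbabilityMeasure (P.map (pathInc X 0)) :=
    Measure.isProbabilityMeasure_map (measurable_pathInc hX 0).aemeasurable
  have hTm := hT.measurable
  have hTfin : MeasurableSet {ω | T ω < ⊤} := measurableSet_lt hTm measurable_const
  set ν := P.restrict {ω | T ω < ⊤} with hν
  have hm1 : ∀ m, Measurable (fun ω => X (rhoQ m (T ω).toReal) ω) := fun m => by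
    simpa using measurable_at_rho hX hTm m 0
  have hm2 : ∀ m, Measurable (fun ω => pathInc X (rhoQ m (T ω).toReal) ω) := fun m =>
    measurable_pi_lambda _ fun u => (measurable_at_rho hX hTm m u).sub (hm1 m)
  have hae1 : AEMeasurable (fun ω => X (T ω).toReal ω) ν := (aemeas_at_zero hX hTm).restrict
  have hae2 : AEMeasurable (fun ω => pathInc X (T ω).toReal ω) ν := (aemeas_path hX hTm).restrict
  have hdisc : ∀ m, ν.map (fun ω => (X (rhoQ m (T ω).toReal) ω, pathInc X (rhoQ m (T ω).toReal) ω)) =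
      (ν.map (fun ω => X (rhoQ m (T ω).toReal) ω)).prod (P.map (pathInc X 0)) := by
    intro m
    symm
    refine Measure.prod_eq fun B C hB hC => ?_
    rw [Measure.map_apply ((hm1 m).prodMk (hm2 m)) (hB.prod hC), Measure.map_apply (hm1 m) hB,
      hν, Measure.restrict_apply (((hm1 m).prodMk (hm2 m)) (hB.prod hC)),
      Measure.restrict_apply (hm1 m hB)]
    have := disc_markov hX hT m hB hC
    convert this using 2
    · ext ω
      simp only [mem_inter_iff, mem_preimage, mem_prod, mem_ofPred_eq]
      tauto
    · congr 1
      ext ω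
      simp only [mem_inter_iff, mem_preimage, mem_ofPred_eq]
      tauto
  apply Measure.eq_prod_of_integral_mul_boundedContinuousFunction
  intro f g
  rw [integral_map (hae1.prodMk hae2) (by fun_prop), integral_map hae1 (by fun_prop)]
  have hconv : ∀ᵐ ω ∂ν, RC (fun t => X t ω) := ae_restrict_of_ae hX.ae_rc
  have ht1 : ∀ᵐ ω ∂ν, Tendsto (fun m => X (rhoQ m (T ω).toReal) ω) atTop (𝓝 (X (T ω).toReal ω)) := by
    filter_upwards [hconv] with ω h using h.tendsto_rho ENNReal.toReal_nonneg
  have ht2 : ∀ᵐ ω ∂ν, Tendsto (fun m => pathInc X (rhoQ m (T ω).toReal) ω) atTop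
      (𝓝 (pathInc X (T ω).toReal ω)) := by
    filter_upwards [hconv] with ω h
    refine tendsto_pi_nhds.2 fun u => ?_
    exact (tendsto_at_rho h ENNReal.toReal_nonneg (by positivity)).sub
      (h.tendsto_rho ENNReal.toReal_nonneg)
  have L1 : Tendsto (fun m => ∫ ω, f (X (rhoQ m (T ω).toReal) ω) *
      g (pathInc X (rhoQ m (T ω).toReal) ω) ∂ν) atTop
      (𝓝 (∫ ω, f (X (T ω).toReal ω) * g (pathInc X (T ω).toReal ω) ∂ν)) := by
    refine tendsto_integral_of_dominated_convergence (fun _ => ‖f‖ * ‖g‖) ?_ (integrable_const _) ?_ ?_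
    · intro m
      have h1 := (f.continuous.measurable.comp (hm1 m)).mul (g.continuous.measurable.comp (hm2 m))
      exact h1.aestronglyMeasurable
    · intro m
      refine Eventually.of_forall fun ω => ?_
      rw [norm_mul]
      exact mul_le_mul (f.norm_coe_le_norm _) (g.norm_coe_le_norm _) (norm_nonneg _) (norm_nonneg _)
    · filter_upwards [ht1, ht2] with ω h1 h2
      exact ((f.continuous.tendsto _).comp h1).mul ((g.continuous.tendsto _).comp h2)
  have L2 : Tendsto (fun m => ∫ ω, f (X (rhoQ m (T ω).toReal) ω) ∂ν) atTop
      (𝓝 (∫ ω, f (X (T ω).toReal ω) ∂ν)) := by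
    refine tendsto_integral_of_dominated_convergence (fun _ => ‖f‖) ?_ (integrable_const _) ?_ ?_
    · intro m
      exact (f.continuous.measurable.comp (hm1 m)).aestronglyMeasurable
    · intro m
      exact Eventually.of_forall fun ω => f.norm_coe_le_norm _
    · filter_upwards [ht1] with ω h1
      exact (f.continuous.tendsto _).comp h1
  refine tendsto_nhds_unique L1 ((L2.mul_const _).congr fun m => ?_)
  have h3 : ∫ p, f p.1 * g p.2 ∂(ν.map (fun ω => (X (rhoQ m (T ω).toReal) ω,
      pathInc X (rhoQ m (T ω).toReal) ω))) = _ :=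
    congrArg (fun κ : Measure (ℝ × (ℚ≥0 → ℝ)) => ∫ p, f p.1 * g p.2 ∂κ) (hdisc m)
  rw [integral_map ((hm1 m).prodMk (hm2 m)).aemeasurable (by fun_prop)] at h3
  rw [h3, integral_prod_mul (f := f) (g := g), integral_map (hm1 m).aemeasurable (by fun_prop)]

lemma optT_tauQ {Ω : Type*} {m0 : MeasurableSpace Ω} {P : Measure Ω}
    {F : MeasureTheory.Filtration ℝ m0} {X : ℝ → Ω → ℝ} (hX : IsLevy P F X) (a : ℝ) :
    OptT F (fun ω => tauQ a (fun u => X u ω)) := by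
  intro t ht
  have : {ω | tauQ a (fun u => X u ω) < ENNReal.ofReal t} =
      ⋃ u : ℚ≥0, ⋃ (_ : (u : ℝ) < t), X u ⁻¹' Ioi a := by
    ext ω
    simp only [mem_ofPred_eq, mem_iUnion, mem_preimage, mem_Ioi, exists_prop]
    constructor
    · intro h
      obtain ⟨u, h1, h2⟩ := exists_of_tauQ_lt h
      exact ⟨u, (ENNReal.ofReal_lt_ofReal_iff_of_nonneg (by positivity)).1 h2, h1⟩
    · rintro ⟨u, h1, h2⟩
      exact lt_of_le_of_lt (tauQ_le_of_lt (z := fun u : ℚ≥0 => X u ω) h2)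
        ((ENNReal.ofReal_lt_ofReal_iff_of_nonneg (by positivity)).2 h1)
  rw [this]
  exact MeasurableSet.iUnion fun u => MeasurableSet.iUnion fun hu =>
    F.mono hu.le _ (hX.adapted u measurableSet_Ioi)

lemma OptT.iSup {Ω : Type*} {m0 : MeasurableSpace Ω} {F : MeasureTheory.Filtration ℝ m0}
    {T : ℕ → Ω → ℝ≥0∞} (hT : ∀ n, OptT F (T n)) : OptT F (fun ω => ⨆ n, T n ω) := by
  intro t ht
  have : {ω | ⨆ n, T n ω < ENNReal.ofReal t} =
      ⋃ q : ℚ, ⋃ (_ : (0 : ℝ) ≤ q ∧ (q : ℝ) < t), ⋂ n, {ω | T n ω < ENNReal.ofReal q} := by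
    ext ω
    simp only [mem_ofPred_eq, mem_iUnion, mem_iInter, exists_prop]
    constructor
    · intro h
      have hne : ⨆ n, T n ω ≠ ⊤ := (h.trans ENNReal.ofReal_lt_top).ne
      obtain ⟨q, hq1, hq2⟩ := exists_rat_btwn ((ENNReal.lt_ofReal_iff_toReal_lt hne).1 h)
      refine ⟨q, ⟨ENNReal.toReal_nonneg.trans hq1.le, hq2⟩, fun n => ?_⟩
      exact lt_of_le_of_lt (le_iSup (fun n => T n ω) n) ((ENNReal.lt_ofReal_iff_toReal_lt hne).2 hq1)
    · rintro ⟨q, ⟨h0, hq⟩, h⟩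
      exact lt_of_le_of_lt (iSup_le fun n => (h n).le)
        ((ENNReal.ofReal_lt_ofReal_iff_of_nonneg h0).2 hq)
  rw [this]
  exact MeasurableSet.iUnion fun q => MeasurableSet.iUnion fun hq => MeasurableSet.iInter fun n =>
    F.mono hq.2.le _ (hT n q hq.1)

lemma optT_supQ {Ω : Type*} {m0 : MeasurableSpace Ω} {P : Measure Ω}
    {F : MeasureTheory.Filtration ℝ m0} {X : ℝ → Ω → ℝ} (hX : IsLevy P F X) (x : ℝ) :
    OptT F (fun ω => supQ x (fun u => X u ω)) :=
  OptT.iSup fun _ => optT_tauQ hX _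

lemma shift_bound {Ω : Type*} {m0 : MeasurableSpace Ω} {P : Measure Ω}
    {F : MeasureTheory.Filtration ℝ m0} {X : ℝ → Ω → ℝ} (hX : IsLevy P F X)
    {T : Ω → ℝ≥0∞} (hT : OptT F T) {C : Set (ℚ≥0 → ℝ)} (hC : MeasurableSet C) :
    P {ω | T ω < ⊤ ∧ pathInc X (T ω).toReal ω ∈ C} ≤ P.map (pathInc X 0) C := by
  have := hX.isProb
  have : IsProbabilityMeasure (P.map (pathInc X 0)) :=
    Measure.isProbabilityMeasure_map (measurable_pathInc hX 0).aemeasurable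
  have hTm := hT.measurable
  have hTfin : MeasurableSet {ω | T ω < ⊤} := measurableSet_lt hTm measurable_const
  have hae1 := (aemeas_at_zero hX hTm).restrict (s := {ω | T ω < ⊤})
  have hae2 := (aemeas_path hX hTm).restrict (s := {ω | T ω < ⊤})
  have h := congrArg (fun κ : Measure (ℝ × (ℚ≥0 → ℝ)) => κ (univ ×ˢ C)) (strong_markov hX hT)
  simp only [Measure.prod_prod] at h
  rw [Measure.map_apply_of_aemeasurable (hae1.prodMk hae2) (MeasurableSet.univ.prod hC),
    Measure.restrict_apply' hTfin] at h
  have e : {ω | T ω < ⊤ ∧ pathInc X (T ω).toReal ω ∈ C} =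
    (fun ω => (X (T ω).toReal ω, pathInc X (T ω).toReal ω)) ⁻¹' univ ×ˢ C ∩ {ω | T ω < ⊤} := by
    ext ω
    simp only [mem_inter_iff, mem_preimage, mem_prod, mem_ofPred_eq, mem_univ, true_and]
    tauto
  rw [e, h]
  calc _ ≤ 1 * P.map (pathInc X 0) C := by
        gcongr
        rw [Measure.map_apply_of_aemeasurable hae1 MeasurableSet.univ]
        exact (Measure.restrict_apply_le _ _).trans prob_le_one
    _ = _ := one_mul _

def dipSet (ε u : ℝ) : Set (ℚ≥0 → ℝ) := {z | ∃ r : ℚ≥0, (r : ℝ) < u ∧ z r < -ε}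

lemma measurableSet_dipSet (ε u : ℝ) : MeasurableSet (dipSet ε u) := by
  have : dipSet ε u = ⋃ r : ℚ≥0, ⋃ (_ : (r : ℝ) < u), (fun z : ℚ≥0 → ℝ => z r) ⁻¹' Iio (-ε) := by
    ext z
    simp [dipSet]
  rw [this]
  exact MeasurableSet.iUnion fun u => MeasurableSet.iUnion fun hu =>
    measurable_pi_apply u measurableSet_Iio

lemma tendsto_dip {Ω : Type*} {m0 : MeasurableSpace Ω} {P : Measure Ω}
    {F : MeasureTheory.Filtration ℝ m0} {X : ℝ → Ω → ℝ} (hX : IsLevy P F X)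
    {ε : ℝ} (hε : 0 < ε) :
    Tendsto (fun j : ℕ => P.map (pathInc X 0) (dipSet ε (1 / ((j : ℝ) + 1)))) atTop (𝓝 0) := by
  have := hX.isProb
  have : IsProbabilityMeasure (P.map (pathInc X 0)) :=
    Measure.isProbabilityMeasure_map (measurable_pathInc hX 0).aemeasurable
  have h0 : P.map (pathInc X 0) (⋂ j : ℕ, dipSet ε (1 / ((j : ℝ) + 1))) = 0 := by
    rw [Measure.map_apply (measurable_pathInc hX 0)
      (MeasurableSet.iInter fun j => measurableSet_dipSet _ _)]
    refine measure_mono_null ?_ hX.ae_rc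
    intro ω hω hrc
    have hrc : RC (fun t => X t ω) := hrc
    have h1 := hrc 0 le_rfl (Ioi_mem_nhds (show X 0 ω - ε < X 0 ω by linarith))
    rw [Filter.mem_map, mem_nhdsGE_iff_exists_Ico_subset] at h1
    obtain ⟨v, hv, hsub⟩ := h1
    obtain ⟨j, hj⟩ := exists_nat_one_div_lt (show (0 : ℝ) < v from hv)
    simp only [mem_preimage, mem_iInter] at hω
    obtain ⟨r, hr1, hr2⟩ := hω j
    have h3 : X 0 ω - ε < X r ω := hsub ⟨by positivity, hr1.trans hj⟩
    simp only [pathInc, zero_add] at hr2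
    linarith
  rw [← h0]
  refine tendsto_measure_iInter_atTop (fun j => (measurableSet_dipSet _ _).nullMeasurableSet) ?_
    ⟨0, measure_ne_top _ _⟩
  intro i j hij z hz
  obtain ⟨r, hr1, hr2⟩ := hz
  refine ⟨r, hr1.trans_le ?_, hr2⟩
  apply one_div_le_one_div_of_le (by positivity)
  have : (i : ℝ) ≤ j := by exact_mod_cast hij
  linarith

lemma qlc_aux {Ω : Type*} {m0 : MeasurableSpace Ω} {P : Measure Ω}
    {F : MeasureTheory.Filtration ℝ m0} {X : ℝ → Ω → ℝ} (hX : IsLevy P F X) (x : ℝ)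
    {ε : ℝ} (hε : 0 < ε) :
    P {ω | RC (fun t => X t ω) ∧ supQ x (fun u => X u ω) < ⊤ ∧
      X (supQ x (fun u => X u ω)).toReal ω < x - 2 * ε} = 0 := by
  refine le_antisymm ?_ bot_le
  refine ge_of_tendsto' (tendsto_dip hX hε) fun j => ?_
  set u : ℝ := 1 / ((j : ℝ) + 1) with hu
  have hu0 : 0 < u := by positivity
  obtain ⟨N, hN⟩ := exists_nat_one_div_lt hε
  let τ : ℕ → Ω → ℝ≥0∞ := fun n ω => tauQ (x - 1 / (((n + N : ℕ) : ℝ) + 1)) (fun u => X u ω)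
  have hτm : ∀ ω, Monotone (fun n => τ n ω) := fun ω n m hnm =>
    tauQ_seq_mono x (fun u => X u ω) (Nat.add_le_add_right hnm N)
  have hτs : ∀ ω, supQ x (fun u => X u ω) = ⨆ n, τ n ω := fun ω =>
    ((tauQ_seq_mono x (fun u => X u ω)).iSup_nat_add N).symm
  let H : ℕ → Set Ω := fun n => {ω | RC (fun t => X t ω) ∧ supQ x (fun u => X u ω) < ⊤ ∧
      X (supQ x (fun u => X u ω)).toReal ω < x - 2 * ε ∧
      supQ x (fun u => X u ω) < τ n ω + ENNReal.ofReal u}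
  have hHm : Monotone H := by
    intro n m hnm ω hω
    refine ⟨hω.1, hω.2.1, hω.2.2.1, hω.2.2.2.trans_le ?_⟩
    gcongr
    exact hτm ω hnm
  have hsub : {ω | RC (fun t => X t ω) ∧ supQ x (fun u => X u ω) < ⊤ ∧
      X (supQ x (fun u => X u ω)).toReal ω < x - 2 * ε} ⊆ ⋃ n, H n := by
    rintro ω ⟨h1, h2, h3⟩
    have h4 : supQ x (fun u => X u ω) < supQ x (fun u => X u ω) + ENNReal.ofReal u :=
      ENNReal.lt_add_right h2.ne (by simpa using hu0)
    conv_rhs at h4 => rw [hτs ω, ENNReal.iSup_add]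
    obtain ⟨n, hn⟩ := lt_iSup_iff.1 h4
    exact mem_iUnion.2 ⟨n, h1, h2, h3, hn⟩
  refine (measure_mono hsub).trans ?_
  rw [hHm.measure_iUnion]
  refine iSup_le fun n => ?_
  refine le_trans (measure_mono ?_) (shift_bound hX (optT_tauQ hX (x - 1 / (((n + N : ℕ) : ℝ) + 1)))
    (measurableSet_dipSet ε u))
  rintro ω ⟨h1, h2, h3, h4⟩
  have hle : τ n ω ≤ supQ x (fun u => X u ω) := by rw [hτs]; exact le_iSup (fun n => τ n ω) n
  have hτfin : τ n ω < ⊤ := hle.trans_lt h2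
  refine ⟨hτfin, ?_⟩
  change pathInc X (τ n ω).toReal ω ∈ _
  have hval : x - 1 / (((n + N : ℕ) : ℝ) + 1) ≤ X (τ n ω).toReal ω := le_at_tauQ h1 hτfin.ne
  have h5 : 1 / (((n + N : ℕ) : ℝ) + 1) ≤ 1 / ((N : ℝ) + 1) := by
    apply one_div_le_one_div_of_le (by positivity)
    push_cast
    have : (0 : ℝ) ≤ n := by positivity
    linarith
  set S := (supQ x (fun u => X u ω)).toReal with hS
  set t := (τ n ω).toReal with ht
  have ht0 : 0 ≤ t := ENNReal.toReal_nonneg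
  have htS : t ≤ S := ENNReal.toReal_mono h2.ne hle
  have hSu : S < t + u := by
    have := (ENNReal.toReal_lt_toReal h2.ne (ENNReal.add_ne_top.2 ⟨hτfin.ne, ENNReal.ofReal_ne_top⟩)).2 h4
    rwa [ENNReal.toReal_add hτfin.ne ENNReal.ofReal_ne_top, ENNReal.toReal_ofReal hu0.le] at this
  obtain ⟨r, hr1, hr2, hr3⟩ := (h1.shift ht0).exists_rat (t := S - t) (by linarith)
    (U := Iio (-ε)) (Iio_mem_nhds (by simp only [add_sub_cancel]; linarith)) (r := u) (by linarith)
  exact ⟨r, hr2, hr3⟩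

lemma hit_eq {Ω : Type*} {m0 : MeasurableSpace Ω} {P : Measure Ω}
    {F : MeasureTheory.Filtration ℝ m0} {X : ℝ → Ω → ℝ} (hX : IsLevy P F X) (x : ℝ) :
    ∀ᵐ ω ∂P, hitT X x ω = supQ x (fun u => X u ω) := by
  have h1 : ∀ k : ℕ, ∀ᵐ ω ∂P, ¬ (RC (fun t => X t ω) ∧ supQ x (fun u => X u ω) < ⊤ ∧
      X (supQ x (fun u => X u ω)).toReal ω < x - 2 * (1 / ((k : ℝ) + 1))) := fun k =>
    measure_eq_zero_iff_ae_notMem.1 (qlc_aux hX x (by positivity))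
  filter_upwards [hX.ae_rc, ae_all_iff.2 h1] with ω hrc h
  apply le_antisymm
  · by_cases hfin : supQ x (fun u => X u ω) = ⊤
    · rw [hfin]; exact le_top
    have hge : x ≤ X (supQ x (fun u => X u ω)).toReal ω := by
      by_contra! hlt
      obtain ⟨k, hk⟩ := exists_nat_one_div_lt (show 0 <
        (x - X (supQ x (fun u => X u ω)).toReal ω) / 2 by linarith)
      exact h k ⟨hrc, lt_top_iff_ne_top.2 hfin, by linarith⟩
    have hmem : ENNReal.ofReal (supQ x (fun u => X u ω)).toReal ∈
        (fun t : ℝ => ENNReal.ofReal t) '' {t : ℝ | 0 ≤ t ∧ x ≤ X t ω} :=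
      ⟨_, ⟨ENNReal.toReal_nonneg, hge⟩, rfl⟩
    refine (sInf_le hmem).trans ?_
    exact (ENNReal.ofReal_toReal hfin).le
  · refine le_sInf ?_
    rintro _ ⟨t, ⟨ht0, ht⟩, rfl⟩
    exact supQ_le hrc ht0 ht

lemma Qfun_eq {Ω : Type*} {m0 : MeasurableSpace Ω} {P : Measure Ω}
    {F : MeasureTheory.Filtration ℝ m0} {X : ℝ → Ω → ℝ} (hX : IsLevy P F X) (x : ℝ)
    {B : Set ℝ} (hB : MeasurableSet B) :
    Qfun P X x B = P.map (pathInc X 0) {z | supQ x z < ⊤ ∧ valQ x z ∈ B} := by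
  have := hX.isProb
  have hmx : Measurable (fun z : ℚ≥0 → ℝ => (x, z)) := measurable_const.prodMk measurable_id
  have hms : MeasurableSet {z | supQ x z < ⊤ ∧ valQ x z ∈ B} :=
    MeasurableSet.inter (measurableSet_lt (measurable_supQ.comp hmx) measurable_const)
      ((measurable_valQ.comp hmx) hB)
  rw [Measure.map_apply (measurable_pathInc hX 0) hms, Qfun]
  apply measure_congr
  have hst : ∀ᵐ ω ∂P, X 0 ω = 0 := (mem_ae_iff_prob_eq_one
    (hX.meas 0 (measurableSet_singleton (0 : ℝ)))).2 hX.start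
  filter_upwards [hX.ae_rc, hst, hit_eq hX x] with ω hrc h0 hh
  have hp : pathInc X 0 ω = fun u : ℚ≥0 => X u ω := by
    ext u; simp [pathInc, h0]
  have hv := valQ_eq hrc x
  apply propext
  change (stopVal X x ω ∈ B ∧ hitT X x ω < ⊤) ↔
    (supQ x (pathInc X 0 ω) < ⊤ ∧ valQ x (pathInc X 0 ω) ∈ B)
  rw [hp, stopVal, hh, hv, and_comm]

/-- The overshoot identity `Q^b(A) = ∫ Q^{b−x}(A−x) dQ̄^c(x)` for `0 < c < b`, the
integrand being measurable w.r.t. the `Q^c`-completion of the Borel σ-field (here `Q^c`,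
as a measure, is the law of `X(T_c)` under `P` restricted to `{T_c < ∞}`; integration
w.r.t. the completion `Q̄^c` coincides with integration w.r.t. `Q^c` for such integrands). -/
theorem overshoot_measure_identity {Ω : Type*} {m0 : MeasurableSpace Ω}
    (P : Measure Ω) (F : MeasureTheory.Filtration ℝ m0) (X : ℝ → Ω → ℝ)
    (hX : IsLevy P F X)
    (b c : ℝ) (hb : 0 < c) (hcb : c < b) (A : Set ℝ) (hA : MeasurableSet A) :
    NullMeasurable (fun y : ℝ => Qfun P X (b - y) ((fun a => a - y) '' A))
      (Measure.map (stopVal X c) (P.restrict {ω | hitT X c ω < ⊤})) ∧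
    Qfun P X b A =
      ∫⁻ y, Qfun P X (b - y) ((fun a => a - y) '' A)
        ∂(Measure.map (stopVal X c) (P.restrict {ω | hitT X c ω < ⊤})) := by
  have := hX.isProb
  have : IsProbabilityMeasure (P.map (pathInc X 0)) :=
    Measure.isProbabilityMeasure_map (measurable_pathInc hX 0).aemeasurable
  set μ := P.map (pathInc X 0) with hμ
  set T : Ω → ℝ≥0∞ := fun ω => supQ c (fun u => X u ω) with hTdef
  have hT : OptT F T := optT_supQ hX c
  have hTm := hT.measurable
  have hTfin : MeasurableSet {ω | T ω < ⊤} := measurableSet_lt hTm measurable_const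
  have hae1 := (aemeas_at_zero hX hTm).restrict (s := {ω | T ω < ⊤})
  have hae2 := (aemeas_path hX hTm).restrict (s := {ω | T ω < ⊤})
  have hhit := hit_eq hX c
  have hQ : Measure.map (stopVal X c) (P.restrict {ω | hitT X c ω < ⊤}) =
      Measure.map (fun ω => X (T ω).toReal ω) (P.restrict {ω | T ω < ⊤}) := by
    have hset : {ω | hitT X c ω < ⊤} =ᵐ[P] {ω | T ω < ⊤} := by
      filter_upwards [hhit] with ω h
      apply propext
      change hitT X c ω < ⊤ ↔ T ω < ⊤
      rw [h]
    rw [Measure.restrict_congr_set hset]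
    apply Measure.map_congr
    filter_upwards [ae_restrict_of_ae hhit] with ω h
    rw [stopVal, h]
  let E : Set (ℝ × (ℚ≥0 → ℝ)) :=
    {p | supQ (b - p.1) p.2 < ⊤ ∧ valQ (b - p.1) p.2 + p.1 ∈ A}
  have hmE : Measurable (fun p : ℝ × (ℚ≥0 → ℝ) => (b - p.1, p.2)) :=
    (measurable_const.sub measurable_fst).prodMk measurable_snd
  have hE : MeasurableSet E :=
    MeasurableSet.inter (measurableSet_lt (measurable_supQ.comp hmE) measurable_const)
      (((measurable_valQ.comp hmE).add measurable_fst) hA)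
  have hint : (fun y : ℝ => Qfun P X (b - y) ((fun a => a - y) '' A)) =
      fun y => μ (Prod.mk y ⁻¹' E) := by
    ext y
    have himg : (fun a => a - y) '' A = (fun v => v + y) ⁻¹' A := by
      ext v
      simp only [mem_image, mem_preimage]
      constructor
      · rintro ⟨a, ha, rfl⟩; simpa using ha
      · intro h; exact ⟨v + y, h, by ring⟩
    have hpm : MeasurableSet ((fun v : ℝ => v + y) ⁻¹' A) := (measurable_add_const y) hA
    rw [himg, Qfun_eq hX _ hpm]
    rfl
  rw [hint]
  have hmeas : Measurable (fun y => μ (Prod.mk y ⁻¹' E)) := measurable_measure_prodMk_left hE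
  refine ⟨hmeas.nullMeasurable, ?_⟩
  rw [hQ, ← Measure.prod_apply hE, hμ, ← strong_markov hX hT,
    Measure.map_apply_of_aemeasurable (hae1.prodMk hae2) hE, Measure.restrict_apply' hTfin, Qfun]
  apply measure_congr
  filter_upwards [hX.ae_rc, hit_eq hX b] with ω hrc hhb
  apply propext
  change (stopVal X b ω ∈ A ∧ hitT X b ω < ⊤) ↔
    ((supQ (b - X (T ω).toReal ω) (pathInc X (T ω).toReal ω) < ⊤ ∧
      valQ (b - X (T ω).toReal ω) (pathInc X (T ω).toReal ω) + X (T ω).toReal ω ∈ A) ∧ T ω < ⊤)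
  rw [stopVal, hhb]
  by_cases hTf : T ω < ⊤
  swap
  · have : supQ b (fun u => X u ω) = ⊤ := by
      have h1 : T ω ≤ supQ b (fun u => X u ω) := supQ_mono _ hcb.le
      exact top_le_iff.1 ((not_lt_top_iff.1 hTf) ▸ h1)
    simp [this, hTf]
  set s := (T ω).toReal with hs
  have hs0 : 0 ≤ s := ENNReal.toReal_nonneg
  have hsh := supQ_shift hrc hcb s hs
  have hp : pathInc X s ω = fun u : ℚ≥0 => X (s + u) ω - X s ω := rfl
  have hv := valQ_eq (hrc.shift hs0) (b - X s ω)
  rw [hp, hv, hsh]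
  simp only [hTf, and_true]
  by_cases hf : supQ (b - X s ω) (fun u => X (s + u) ω - X s ω) = ⊤
  · simp [hf]
  · rw [ENNReal.toReal_add ENNReal.ofReal_ne_top hf, ENNReal.toReal_ofReal hs0]
    simp only [sub_add_cancel, ENNReal.add_lt_top, ENNReal.ofReal_lt_top, true_and]
    tauto
end
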